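/- The double series F := ∑_{m,n=0}^∞ ((2)_{m+n}/(5/2)_{m+n}) · ((1)_m(1)_m/((2)_m m!)) · ((1/2)_n(1/2)_n/((1)_n n!)) converges and equals 3π log 2. -/

import Mathlib

open Filter Topology Finset

noncomputable def kP (x : ℝ) (n : ℕ) : ℝ := (ascPochhammer ℝ n).eval x

lemma kP_zero (x : ℝ) : kP x 0 = 1 := by simp [kP]

lemma kP_succ (x : ℝ) (n : ℕ) : kP x (n + 1) = kP x n * (x + n) := by
  simp [kP, ascPochhammer_succ_eval]

lemma kP_pos {x : ℝ} (hx : 0 < x) (n : ℕ) : 0 < kP x n := by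
  induction n with
  | zero => simp [kP_zero]
  | succ n ih => rw [kP_succ]; positivity

lemma kP_one (n : ℕ) : kP 1 n = (n.factorial : ℝ) := by
  simp [kP]

lemma kP_two (n : ℕ) : kP 2 n = (n.factorial : ℝ) * (n + 1) := by
  induction n with
  | zero => simp [kP_zero]
  | succ n ih => rw [kP_succ, ih, Nat.factorial_succ]; push_cast; ring

noncomputable def kf (s : ℝ) (n : ℕ) : ℝ := kP (1/2) n ^ 2 / (n.factorial * kP s (n+1))

noncomputable def kh (s : ℝ) (n : ℕ) : ℝ := ∑ k ∈ range (n+1), 1 / (s + k)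

lemma kf_zero (s : ℝ) : kf s 0 = 1 / s := by simp [kf, kP_zero, kP_succ]

lemma kf_succ {s : ℝ} (hs : 0 < s) (n : ℕ) :
    kf s (n+1) = kf s n * ((n + 1/2)^2 / ((n+1) * (s + n + 1))) := by
  have h1 := kP_pos hs (n+1)
  have h2 : (n.factorial : ℝ) ≠ 0 := by positivity
  have h3 : s + n + 1 ≠ 0 := by positivity
  unfold kf
  rw [kP_succ s (n+1), kP_succ (1/2) n, Nat.factorial_succ]
  push_cast
  rw [show s + ((n:ℝ) + 1) = s + n + 1 by ring]
  field_simp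
  ring

lemma kf_pos {s : ℝ} (hs : 0 < s) (n : ℕ) : 0 < kf s n := by
  have h1 := kP_pos hs (n+1)
  have h2 := kP_pos (x := 1/2) (by norm_num) n
  unfold kf; positivity

lemma kf_shift {s : ℝ} (hs : 0 < s) (n : ℕ) : kf (s+1) n = kf s n * (s / (s + n + 1)) := by
  induction n with
  | zero => simp [kf_zero]; field_simp
  | succ n ih =>
    rw [kf_succ hs, kf_succ (by positivity), ih]
    push_cast
    have h3 : s + n + 1 ≠ 0 := by positivity
    have h4 : s + 1 + n + 1 ≠ 0 := by positivity
    have h5 : s + (n + 1) + 1 ≠ 0 := by positivity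
    field_simp
    ring

lemma kh_zero (s : ℝ) : kh s 0 = 1 / s := by simp [kh]

lemma kh_succ (s : ℝ) (n : ℕ) : kh s (n+1) = kh s n + 1 / (s + n + 1) := by
  unfold kh; rw [sum_range_succ _ (n+1)]; push_cast; ring_nf

lemma kh_shift (s : ℝ) (n : ℕ) :
    kh (s+1) n = kh s n - 1 / s + 1 / (s + n + 1) := by
  induction n with
  | zero => simp [kh_zero]
  | succ n ih =>
    rw [kh_succ, kh_succ, ih]; push_cast
    rw [show s + 1 + (n:ℝ) + 1 = s + (n+1) + 1 by ring]; ring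

lemma kh_pos {s : ℝ} (hs : 0 < s) (n : ℕ) : 0 < kh s n := by
  unfold kh
  exact sum_pos (fun k _ => by positivity) (by simp)

lemma kh_le {s : ℝ} (hs : 1/2 ≤ s) (n : ℕ) : kh s n ≤ kh (1/2) n := by
  unfold kh
  apply sum_le_sum
  intro k _
  gcongr

lemma kf_dom {s : ℝ} (hs : 1/2 ≤ s) (n : ℕ) : s * kf s n ≤ kf (1/2) n := by
  have hs0 : 0 < s := by linarith
  induction n with
  | zero => simp only [kf_zero]; rw [mul_one_div_cancel hs0.ne']; norm_num
  | succ n ih =>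
    rw [kf_succ hs0, kf_succ (by norm_num), ← mul_assoc]
    have := (kf_pos hs0 n).le
    have := (kf_pos (s := 1/2) (by norm_num) n).le
    gcongr

lemma kf_half_sq (n : ℕ) : kf (1/2) n ^ 2 * (n + 1/2)^3 ≤ 1/2 := by
  induction n with
  | zero => simp [kf_zero]; norm_num
  | succ n ih =>
    rw [kf_succ (by norm_num)]
    refine le_trans ?_ ih
    push_cast
    have h0 := (kf_pos (s := 1/2) (by norm_num) n).le
    have : (kf (1/2) n * (((n:ℝ) + 1/2)^2 / ((n+1) * (1/2 + n + 1))))^2 * (n + 1 + 1/2)^3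
      = (kf (1/2) n ^2 * (n+1/2)^3) * (((n:ℝ) + 1/2) * (n + 3/2) / (n+1)^2) := by
      rw [show (1/2 + (n:ℝ) + 1) = n + 3/2 by ring, show ((n:ℝ) + 1 + 1/2) = n + 3/2 by ring]
      field_simp
    rw [this]
    apply mul_le_of_le_one_right (by positivity)
    rw [div_le_one (by positivity)]
    nlinarith

lemma kf_half_le (n : ℕ) : kf (1/2) n ≤ 2 * ((n:ℝ)+1)^(-(3/2) : ℝ) := by
  have h := kf_half_sq n
  have hN : (0:ℝ) < (n:ℝ)+1 := by positivity
  apply le_of_sq_le_sq _ (by positivity)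
  have h2 : (((n:ℝ)+1)^(-(3/2) : ℝ))^2 = (((n:ℝ)+1)^3)⁻¹ := by
    rw [← Real.rpow_natCast, ← Real.rpow_mul hN.le, ← Real.rpow_natCast, ← Real.rpow_neg hN.le]
    norm_num
  rw [mul_pow, h2, ← div_eq_mul_inv, le_div_iff₀ (by positivity)]
  have h3 : ((n:ℝ)+1)^3 ≤ 8 * ((n:ℝ)+1/2)^3 := by
    have : ((n:ℝ)+1)^3 ≤ (2 * ((n:ℝ)+1/2))^3 := by
      gcongr
      linarith [n.cast_nonneg (α := ℝ)]
    nlinarith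
  have h4 := mul_le_mul_of_nonneg_left h3 (sq_nonneg (kf (1/2) n))
  linarith

lemma kh_half_le (n : ℕ) : kh (1/2) n ≤ 10 * ((n:ℝ)+1)^(1/4 : ℝ) := by
  have h1 : kh (1/2) n ≤ 2 * (harmonic (n+1) : ℝ) := by
    unfold kh harmonic
    push_cast
    rw [mul_sum]
    apply sum_le_sum
    intro k _
    rw [← div_eq_mul_inv, div_le_div_iff₀ (by positivity) (by positivity)]
    nlinarith
  have h2 := harmonic_le_one_add_log (n+1)
  have h3 := Real.log_le_rpow_div (x := (n:ℝ)+1) (ε := 1/4) (by positivity) (by norm_num)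
  have h4 : 1 ≤ ((n:ℝ)+1)^(1/4 : ℝ) := Real.one_le_rpow (by linarith [n.cast_nonneg (α := ℝ)]) (by norm_num)
  push_cast at h2
  linarith

noncomputable def ke (s : ℝ) (n : ℕ) : ℝ := kf s n * kh s n

lemma ke_half_le (n : ℕ) : ke (1/2) n ≤ 20 * ((n:ℝ)+1)^(-(5/4) : ℝ) := by
  have hN : (0:ℝ) < (n:ℝ)+1 := by positivity
  calc ke (1/2) n ≤ (2 * ((n:ℝ)+1)^(-(3/2) : ℝ)) * (10 * ((n:ℝ)+1)^(1/4 : ℝ)) :=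
        mul_le_mul (kf_half_le n) (kh_half_le n) (kh_pos (by norm_num) n).le (by positivity)
    _ = 20 * (((n:ℝ)+1)^(-(3/2) : ℝ) * ((n:ℝ)+1)^(1/4 : ℝ)) := by ring
    _ = _ := by rw [← Real.rpow_add hN]; norm_num

lemma ke_half_summable : Summable (ke (1/2)) := by
  have h : Summable (fun n : ℕ => 20 * ((n:ℝ)+1)^(-(5/4) : ℝ)) := by
    apply Summable.mul_left
    have := (summable_nat_add_iff 1).mpr (Real.summable_nat_rpow.mpr (show -(5/4:ℝ) < -1 by norm_num))
    simpa using this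
  exact Summable.of_nonneg_of_le
    (fun n => (mul_pos (kf_pos (by norm_num) n) (kh_pos (by norm_num) n)).le) ke_half_le h

lemma nke_half_tendsto : Tendsto (fun n : ℕ => (n:ℝ) * ke (1/2) n) atTop (𝓝 0) := by
  have h : Tendsto (fun n : ℕ => 20 * ((n:ℝ)+1)^(-(1/4) : ℝ)) atTop (𝓝 0) := by
    have h1 : Tendsto (fun n : ℕ => (n:ℝ)+1) atTop atTop :=
      tendsto_atTop_add_const_right _ _ tendsto_natCast_atTop_atTop
    simpa using ((tendsto_rpow_neg_atTop (show (0:ℝ) < 1/4 by norm_num)).comp h1).const_mul 20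
  have hp := fun n => (mul_pos (kf_pos (s := 1/2) (by norm_num) n) (kh_pos (s := 1/2) (by norm_num) n)).le
  refine squeeze_zero (fun n => mul_nonneg n.cast_nonneg (hp n)) (fun n => ?_) h
  have hN : (0:ℝ) < (n:ℝ)+1 := by positivity
  calc (n:ℝ) * ke (1/2) n ≤ ((n:ℝ)+1) * (20 * ((n:ℝ)+1)^(-(5/4) : ℝ)) :=
        mul_le_mul (by linarith) (ke_half_le n) (hp n) hN.le
    _ = 20 * (((n:ℝ)+1)^(1:ℝ) * ((n:ℝ)+1)^(-(5/4) : ℝ)) := by rw [Real.rpow_one]; ring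
    _ = _ := by rw [← Real.rpow_add hN]; norm_num

lemma kf_half_le_ke (n : ℕ) : kf (1/2) n ≤ ke (1/2) n := by
  have h : 1 ≤ kh (1/2) n := by
    unfold kh
    rw [sum_range_succ']
    have : (0:ℝ) ≤ ∑ k ∈ range n, 1 / (1 / 2 + ((k + 1 : ℕ) : ℝ)) := sum_nonneg fun k _ => by positivity
    simp only [Nat.cast_zero]
    linarith
  exact le_mul_of_one_le_right (kf_pos (by norm_num) n).le h

lemma ke_pos {s : ℝ} (hs : 0 < s) (n : ℕ) : 0 < ke s n := mul_pos (kf_pos hs n) (kh_pos hs n)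

lemma ke_dom {s : ℝ} (hs : 1/2 ≤ s) (n : ℕ) : s * ke s n ≤ ke (1/2) n := by
  have hs0 : 0 < s := by linarith
  unfold ke
  rw [← mul_assoc]
  exact mul_le_mul (kf_dom hs n) (kh_le hs n) (kh_pos hs0 n).le (kf_pos (by norm_num) n).le

lemma kf_dom' {s : ℝ} (hs : 1/2 ≤ s) (n : ℕ) : s * kf s n ≤ ke (1/2) n :=
  (kf_dom hs n).trans (kf_half_le_ke n)

lemma le_of_dom {s a b : ℝ} (hs : 1/2 ≤ s) (ha : 0 ≤ a) (h : s * a ≤ b) : a ≤ 2 * b := by nlinarith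

lemma kf_summable {s : ℝ} (hs : 1/2 ≤ s) : Summable (kf s) :=
  Summable.of_nonneg_of_le (fun n => (kf_pos (by linarith) n).le)
    (fun n => le_of_dom hs (kf_pos (by linarith) n).le (kf_dom' hs n)) (ke_half_summable.mul_left 2)

lemma ke_summable {s : ℝ} (hs : 1/2 ≤ s) : Summable (ke s) :=
  Summable.of_nonneg_of_le (fun n => (ke_pos (by linarith) n).le)
    (fun n => le_of_dom hs (ke_pos (by linarith) n).le (ke_dom hs n)) (ke_half_summable.mul_left 2)

lemma n_tendsto {g : ℕ → ℝ} (h0 : ∀ n, 0 ≤ g n) (h1 : ∀ n, g n ≤ 2 * ke (1/2) n) :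
    Tendsto (fun n : ℕ => (n:ℝ) * g n) atTop (𝓝 0) := by
  refine squeeze_zero (fun n => mul_nonneg n.cast_nonneg (h0 n)) (fun n => ?_)
    (by simpa using nke_half_tendsto.const_mul 2)
  have := mul_le_mul_of_nonneg_left (h1 n) (n.cast_nonneg (α := ℝ))
  linarith

lemma nkf_tendsto {s : ℝ} (hs : 1/2 ≤ s) : Tendsto (fun n : ℕ => (n:ℝ) * kf s n) atTop (𝓝 0) :=
  n_tendsto (fun n => (kf_pos (by linarith) n).le)
    (fun n => le_of_dom hs (kf_pos (by linarith) n).le (kf_dom' hs n))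

lemma nke_tendsto {s : ℝ} (hs : 1/2 ≤ s) : Tendsto (fun n : ℕ => (n:ℝ) * ke s n) atTop (𝓝 0) :=
  n_tendsto (fun n => (ke_pos (by linarith) n).le)
    (fun n => le_of_dom hs (ke_pos (by linarith) n).le (ke_dom hs n))

lemma hasSum_of_eq {u v : ℕ → ℝ} {a b : ℝ} (h : HasSum u a) (huv : ∀ n, v n = u n) (hab : b = a) :
    HasSum v b := by
  rw [hab, funext huv]
  exact h

lemma tel {u v : ℕ → ℝ} {a : ℝ} (hu : HasSum u a) (huv : ∀ n, u n = v n - v (n+1))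
    (hv : Tendsto v atTop (𝓝 0)) : a = v 0 := by
  have h1 := hu.tendsto_sum_nat
  have h2 : ∀ n, ∑ i ∈ range n, u i = v 0 - v n := by
    intro n
    simp_rw [huv]
    exact sum_range_sub' v n
  simp_rw [h2] at h1
  have h3 := (tendsto_const_nhds (x := v 0)).sub hv
  simpa using tendsto_nhds_unique h1 h3

lemma tel_pos {u v : ℕ → ℝ} (hu : ∀ n, 0 ≤ u n) (huv : ∀ n, u n = v n - v (n+1))
    (hv : Tendsto v atTop (𝓝 0)) : HasSum u (v 0) := by
  rw [hasSum_iff_tendsto_nat_of_nonneg hu]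
  have h2 : ∀ n, ∑ i ∈ range n, u i = v 0 - v n := by
    intro n
    simp_rw [huv]
    exact sum_range_sub' v n
  simp_rw [h2]
  simpa using (tendsto_const_nhds (x := v 0)).sub hv

lemma F_rec {s : ℝ} (hs : 1/2 ≤ s) :
    s^2 * (∑' n, kf s n) = (s+1/2)^2 * ∑' n, kf (s+1) n := by
  have hs0 : 0 < s := by linarith
  have h := ((kf_summable hs).hasSum.mul_left (s^2)).sub
    ((kf_summable (s := s+1) (by linarith)).hasSum.mul_left ((s+1/2)^2))
  have := tel (v := fun n => s * (n * kf s n)) h (fun n => ?_)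
    (by simpa using (nkf_tendsto hs).const_mul s)
  · simp at this; linarith
  · have h3 : s + n + 1 ≠ 0 := by positivity
    simp only [kf_shift hs0, kf_succ hs0]
    push_cast
    field_simp
    ring

lemma E_rec {s : ℝ} (hs : 1/2 ≤ s) :
    s^2 * (∑' n, ke s n) - (s+1/2)^2 * ∑' n, ke (s+1) n =
      2 * s * (∑' n, kf s n) - (2*s+1) * ∑' n, kf (s+1) n := by
  have hs0 : 0 < s := by linarith
  have hs1 : 1/2 ≤ s + 1 := by linarith
  have h := (((ke_summable hs).hasSum.mul_left (s^2)).sub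
    ((ke_summable hs1).hasSum.mul_left ((s+1/2)^2))).sub
    (((kf_summable hs).hasSum.mul_left (2*s)).sub
    ((kf_summable hs1).hasSum.mul_left (2*s+1)))
  have := tel (v := fun n => s * (n * ke s n) - n * kf s n) h (fun n => ?_)
    (by simpa using ((nke_tendsto hs).const_mul s).sub (nkf_tendsto hs))
  · simp at this; linarith
  · have h3 : s + n + 1 ≠ 0 := by positivity
    simp only [ke, kf_shift hs0, kf_succ hs0, kh_shift, kh_succ]
    push_cast
    field_simp
    ring

lemma s_tendsto : Tendsto (fun J : ℕ => (J:ℝ) + 1/2) atTop atTop :=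
  tendsto_atTop_add_const_right _ _ tendsto_natCast_atTop_atTop

lemma half_le_s (J : ℕ) : (1/2 : ℝ) ≤ (J:ℝ) + 1/2 := by
  linarith [J.cast_nonneg (α := ℝ)]

lemma sF_tendsto : Tendsto (fun J : ℕ => ((J:ℝ)+1/2) * ∑' n, kf ((J:ℝ)+1/2) n) atTop (𝓝 1) := by
  have h : Tendsto (fun J : ℕ => ∑' n, ((J:ℝ)+1/2) * kf ((J:ℝ)+1/2) n) atTop
      (𝓝 (∑' n : ℕ, if n = 0 then (1:ℝ) else 0)) := by
    apply tendsto_tsum_of_dominated_convergence ke_half_summable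
    · intro n
      rcases n with _ | n
      · simp only [kf_zero, if_true]
        refine tendsto_const_nhds.congr (fun J => ?_)
        rw [mul_one_div_cancel]
        positivity
      · simp only [Nat.add_eq_zero_iff, one_ne_zero, and_false, if_false]
        have h0 : Tendsto (fun J : ℕ => ke (1/2) n * ((n + 1/2)^2 / ((n+1))) * ((J:ℝ)+1/2)⁻¹) atTop (𝓝 0) := by
          simpa using (tendsto_inv_atTop_zero.comp s_tendsto).const_mul (ke (1/2) n * ((n + 1/2)^2 / ((n+1))))
        refine squeeze_zero (fun J => ?_) (fun J => ?_) h0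
        · have := kf_pos (s := (J:ℝ)+1/2) (by positivity) (n+1)
          positivity
        · rw [kf_succ (by positivity), ← mul_assoc, mul_assoc (ke _ _)]
          have := (ke_pos (s := 1/2) (by norm_num) n).le
          refine mul_le_mul (kf_dom' (half_le_s J) n) ?_ (by positivity) this
          rw [← div_eq_mul_inv, div_div]
          refine div_le_div_of_nonneg_left (by positivity) (by positivity) ?_
          refine mul_le_mul_of_nonneg_left ?_ (by positivity)
          linarith [n.cast_nonneg (α := ℝ)]
    · refine Eventually.of_forall (fun J n => ?_)
      have := kf_pos (s := (J:ℝ)+1/2) (by positivity) n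
      rw [Real.norm_of_nonneg (by positivity)]
      exact kf_dom' (half_le_s J) n
  simpa [tsum_mul_left, tsum_ite_eq] using h

lemma sE_tendsto : Tendsto (fun J : ℕ => ((J:ℝ)+1/2) * ∑' n, ke ((J:ℝ)+1/2) n) atTop (𝓝 0) := by
  have h : Tendsto (fun J : ℕ => ∑' n, ((J:ℝ)+1/2) * ke ((J:ℝ)+1/2) n) atTop
      (𝓝 (∑' n : ℕ, (0:ℝ))) := by
    apply tendsto_tsum_of_dominated_convergence ke_half_summable
    · intro n
      have h0 : Tendsto (fun J : ℕ => ke (1/2) n * (n+1) * ((J:ℝ)+1/2)⁻¹) atTop (𝓝 0) := by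
        simpa using (tendsto_inv_atTop_zero.comp s_tendsto).const_mul (ke (1/2) n * (n+1))
      refine squeeze_zero (fun J => ?_) (fun J => ?_) h0
      · have := ke_pos (s := (J:ℝ)+1/2) (by positivity) n
        positivity
      · unfold ke
        rw [← mul_assoc, mul_assoc (kf (1/2) n * _)]
        have h1 := (ke_pos (s := 1/2) (by norm_num) n).le
        refine mul_le_mul (kf_dom' (half_le_s J) n) ?_ (kh_pos (by positivity) n).le h1
        unfold kh
        calc _ ≤ ∑ k ∈ range (n+1), ((J:ℝ)+1/2)⁻¹ := by
              apply sum_le_sum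
              intro k _
              rw [one_div]
              refine inv_anti₀ (by positivity) ?_
              linarith [k.cast_nonneg (α := ℝ)]
          _ = _ := by simp
    · refine Eventually.of_forall (fun J n => ?_)
      have := ke_pos (s := (J:ℝ)+1/2) (by positivity) n
      rw [Real.norm_of_nonneg (by positivity)]
      exact ke_dom (half_le_s J) n
  simpa [tsum_mul_left] using h

noncomputable def kw (J : ℕ) : ℝ := ∏ j ∈ range J, ((j:ℝ)+1)^2 / ((j:ℝ)+1/2)^2

noncomputable def kA (J : ℕ) : ℝ := ∑ j ∈ range J, (2 / ((j:ℝ)+1/2) - 2 / ((j:ℝ)+1))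

lemma kw_wallis (J : ℕ) : kw J / ((J:ℝ)+1/2) = 2 * Real.Wallis.W J := by
  induction J with
  | zero => simp [kw, Real.Wallis.W]
  | succ J ih =>
    rw [Real.Wallis.W_succ, ← mul_assoc, ← ih]
    unfold kw
    rw [prod_range_succ]
    push_cast
    field_simp
    ring

lemma kw_tendsto : Tendsto (fun J : ℕ => kw J / ((J:ℝ)+1/2)) atTop (𝓝 Real.pi) := by
  simp_rw [kw_wallis]
  have := Real.Wallis.tendsto_W_nhds_pi_div_two.const_mul 2
  rwa [mul_div_cancel₀ _ (two_ne_zero)] at this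

lemma wF (J : ℕ) : kw J * ∑' n, kf ((J:ℝ)+1/2) n = ∑' n, kf (1/2) n := by
  induction J with
  | zero => simp [kw]
  | succ J ih =>
    rw [← ih]
    have h := F_rec (half_le_s J)
    unfold kw
    rw [prod_range_succ, mul_assoc]
    congr 1
    push_cast
    rw [show (J:ℝ) + 1 + 1/2 = J + 1/2 + 1 by ring, div_mul_eq_mul_div, div_eq_iff (by positivity)]
    rw [show (J:ℝ) + 1/2 + 1/2 = J + 1 by ring] at h
    linarith

lemma wE (J : ℕ) : kw J * ∑' n, ke ((J:ℝ)+1/2) n =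
    (∑' n, ke (1/2) n) - (∑' n, kf (1/2) n) * kA J := by
  induction J with
  | zero => simp [kw, kA]
  | succ J ih =>
    have h1 := F_rec (half_le_s J)
    have h2 := E_rec (half_le_s J)
    have h3 := wF J
    unfold kA at ih ⊢
    rw [sum_range_succ, mul_add, ← sub_sub, ← ih, ← h3]
    unfold kw
    rw [prod_range_succ, mul_assoc, mul_assoc, ← mul_sub]
    congr 1
    push_cast
    rw [show (J:ℝ) + 1 + 1/2 = J + 1/2 + 1 by ring, div_mul_eq_mul_div, div_eq_iff (by positivity)]
    rw [show (J:ℝ) + 1/2 + 1/2 = J + 1 by ring] at h1 h2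
    generalize (∑' n, kf ((J:ℝ)+1/2) n) = F at *
    generalize (∑' n, ke ((J:ℝ)+1/2) n) = E at *
    generalize (∑' n, kf ((J:ℝ)+1/2+1) n) = F' at *
    generalize (∑' n, ke ((J:ℝ)+1/2+1) n) = E' at *
    have h4 : F' = ((J:ℝ)+1/2)^2 * F / (J+1)^2 := by
      rw [eq_div_iff (by positivity)]; linarith
    rw [h4] at h2
    have h5 : ((J:ℝ)+1)^2 * E' = ((J:ℝ)+1/2)^2 * E - (2 * ((J:ℝ)+1/2) * F - (2*((J:ℝ)+1/2)+1) * (((J:ℝ)+1/2)^2 * F / (J+1)^2)) := by linarith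
    rw [h5]
    field_simp
    ring

lemma kA_eq (J : ℕ) : kA J = 4 * ((harmonic (2*J) : ℝ) - harmonic J) := by
  induction J with
  | zero => simp [kA]
  | succ J ih =>
    unfold kA at ih ⊢
    rw [sum_range_succ, ih, show 2 * (J+1) = 2*J+1+1 by ring]
    simp only [harmonic_succ]
    push_cast
    field_simp
    ring

lemma kA_tendsto : Tendsto kA atTop (𝓝 (4 * Real.log 2)) := by
  have h1 := Real.tendsto_harmonic_sub_log
  have h2 : Tendsto (fun n : ℕ => 2 * n) atTop atTop :=
    tendsto_id.const_mul_atTop' (by norm_num)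
  have h3 := ((h1.comp h2).sub h1).const_add (Real.log 2) |>.const_mul 4
  rw [sub_self, add_zero] at h3
  refine h3.congr' ?_
  filter_upwards [eventually_gt_atTop 0] with J hJ
  rw [kA_eq]
  have : (0:ℝ) < J := by exact_mod_cast hJ
  simp only [Function.comp]
  push_cast
  rw [Real.log_mul (by norm_num) this.ne']
  ring

lemma F0 : ∑' n, kf (1/2) n = Real.pi := by
  have h := kw_tendsto.mul sF_tendsto
  rw [mul_one] at h
  refine tendsto_nhds_unique (tendsto_const_nhds.congr (fun J => ?_)) h
  rw [← wF J]
  have : (J:ℝ) + 1/2 ≠ 0 := by positivity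
  field_simp

lemma E0 : ∑' n, ke (1/2) n = 4 * Real.pi * Real.log 2 := by
  have h := kw_tendsto.mul sE_tendsto
  rw [mul_zero] at h
  have h2 := (tendsto_const_nhds (x := ∑' n, ke (1/2) n)).sub (kA_tendsto.const_mul Real.pi)
  have h3 := tendsto_nhds_unique (h2.congr (fun J => ?_)) h
  · linarith
  · rw [← F0, ← wE J]
    have : (J:ℝ) + 1/2 ≠ 0 := by positivity
    field_simp

noncomputable def kc (n : ℕ) : ℝ := kP 2 n / kP (5/2) n

lemma kc_succ (n : ℕ) : kc (n+1) = kc n * ((n+2) / (n+5/2)) := by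
  unfold kc
  rw [kP_succ, kP_succ, mul_div_mul_comm, add_comm (2:ℝ), add_comm (5/2:ℝ)]

lemma kc_pos (n : ℕ) : 0 < kc n := div_pos (kP_pos (by norm_num) n) (kP_pos (by norm_num) n)

lemma kc_sq (n : ℕ) : kc n ^ 2 * (n+2) ≤ 2 := by
  induction n with
  | zero => simp [kc, kP_zero]
  | succ n ih =>
    refine le_trans ?_ ih
    rw [kc_succ]
    push_cast
    have : (kc n * (((n:ℝ)+2) / (n+5/2)))^2 * (n+1+2) = (kc n ^ 2 * (n+2)) * (((n:ℝ)+2)*(n+3)/(n+5/2)^2) := by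
      field_simp
      ring
    rw [this]
    apply mul_le_of_le_one_right (by positivity)
    rw [div_le_one (by positivity)]
    nlinarith

lemma kc_tendsto : Tendsto kc atTop (𝓝 0) := by
  have h : Tendsto (fun n => kc n ^ 2) atTop (𝓝 0) := by
    have h1 : Tendsto (fun n : ℕ => (n:ℝ)+2) atTop atTop :=
      tendsto_atTop_add_const_right _ _ tendsto_natCast_atTop_atTop
    refine squeeze_zero (fun n => sq_nonneg _) (fun n => ?_)
      (h1.const_div_atTop 2)
    rw [le_div_iff₀ (by positivity)]
    exact kc_sq n
  have h2 := h.sqrt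
  simpa [Real.sqrt_sq (kc_pos _).le] using h2

noncomputable def kg (n : ℕ) : ℝ := 3/4 * n.factorial / kP (1/2) (n+1)

lemma kg_succ (n : ℕ) : kg (n+1) = kg n * ((n+1) / (n+3/2)) := by
  have := (kP_pos (x := 1/2) (by norm_num) (n+1)).ne'
  unfold kg
  rw [kP_succ _ (n+1), Nat.factorial_succ]
  push_cast
  rw [show (1/2:ℝ) + (n+1) = n + 3/2 by ring]
  field_simp

lemma kc_eq (n : ℕ) : kc n = kg n * ((n+1) / (n+3/2)) := by
  induction n with
  | zero => simp [kc, kg, kP_zero, kP_succ]; norm_num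
  | succ n ih =>
    rw [kc_succ, ih, kg_succ]
    push_cast
    field_simp
    ring

lemma S_hasSum (n : ℕ) : HasSum (fun m : ℕ => kc (m+n) / (m+1)) (kg n * kh (1/2) n) := by
  induction n with
  | zero =>
    have h := tel_pos (u := fun m : ℕ => kc (m+0) / (m+1)) (v := fun m => (2*m+3)/(m+1) * kc m)
      (fun m => ?_) (fun m => ?_) ?_
    · refine hasSum_of_eq h (fun m => rfl) ?_
      simp [kg, kh_zero, kP_zero, kP_succ, kc]; norm_num
    · have := (kc_pos (m+0)).le; positivity
    · simp only [add_zero, kc_succ]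
      push_cast
      field_simp
      ring
    · refine squeeze_zero (fun m => ?_) (fun m => ?_) (by simpa using kc_tendsto.const_mul 3)
      · have := (kc_pos m).le; positivity
      · have := (kc_pos m).le
        gcongr
        rw [div_le_iff₀ (by positivity)]
        linarith [m.cast_nonneg (α := ℝ)]
  | succ n ih =>
    have h := tel_pos (u := fun m => kc (m+n) - kc (m+1+n)) (v := fun m => kc (m+n))
      (fun m => ?_) (fun m => rfl) ((tendsto_add_atTop_iff_nat n).mpr kc_tendsto)
    · have h2 := ((ih.mul_left ((n:ℝ)+1)).add h).mul_left (((n:ℝ)+3/2)⁻¹)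
      refine hasSum_of_eq h2 (fun m => ?_) ?_
      · rw [show m + (n+1) = (m+n)+1 by ring, show m + 1 + n = (m+n)+1 by ring, kc_succ]
        push_cast
        field_simp
        ring
      · simp only [zero_add]
        rw [kc_eq, kg_succ, kh_succ, show (1/2:ℝ) + n + 1 = n + 3/2 by ring]
        field_simp
    · rw [show m + 1 + n = (m+n)+1 by ring, kc_succ, ← mul_one_sub]
      refine mul_nonneg (kc_pos _).le ?_
      rw [sub_nonneg, div_le_one (by positivity)]
      linarith

noncomputable def kt (p : ℕ × ℕ) : ℝ :=
  (kP 2 (p.1+p.2) / kP (5/2) (p.1+p.2)) * (kP 1 p.1 * kP 1 p.1 / (kP 2 p.1 * p.1.factorial)) *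
    (kP (1/2) p.2 * kP (1/2) p.2 / (kP 1 p.2 * p.2.factorial))

lemma kt_eq (m n : ℕ) : kt (m, n) =
    (kP (1/2) n ^ 2 / (n.factorial : ℝ)^2) * (kc (m+n) / (m+1)) := by
  have : (m.factorial : ℝ) ≠ 0 := by positivity
  have : (n.factorial : ℝ) ≠ 0 := by positivity
  unfold kt kc
  simp only [kP_one, kP_two m]
  field_simp

lemma kt_fiber (n : ℕ) : HasSum (fun m => kt (m, n)) (3/4 * ke (1/2) n) := by
  have h := (S_hasSum n).mul_left (kP (1/2) n ^ 2 / (n.factorial : ℝ)^2)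
  refine hasSum_of_eq h (fun m => kt_eq m n) ?_
  have := (kP_pos (x := 1/2) (by norm_num) (n+1)).ne'
  have : (n.factorial : ℝ) ≠ 0 := by positivity
  unfold ke kf kg
  field_simp

lemma kt_nonneg (p : ℕ × ℕ) : 0 ≤ kt p := by
  obtain ⟨m, n⟩ := p
  rw [kt_eq]
  have := (kc_pos (m+n)).le
  positivity

lemma kt_hasSum : HasSum kt (3 * Real.pi * Real.log 2) := by
  have hs : Summable (fun q : ℕ × ℕ => kt q.swap) := by
    rw [summable_prod_of_nonneg (fun q => kt_nonneg _)]
    refine ⟨fun n => (kt_fiber n).summable, ?_⟩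
    simp only [Prod.swap_prod_mk, (kt_fiber _).tsum_eq]
    exact ke_half_summable.mul_left _
  have h1 := hs.hasSum.prod_fiberwise (fun n => kt_fiber n)
  have h2 : HasSum (fun n => 3/4 * ke (1/2) n) (3 * Real.pi * Real.log 2) := by
    have := ke_half_summable.hasSum.mul_left (3/4)
    rw [E0] at this
    exact hasSum_of_eq this (fun _ => rfl) (by ring)
  have h3 := hs.hasSum
  rw [h1.unique h2] at h3
  exact (Equiv.prodComm ℕ ℕ).hasSum_iff.mp h3


theorem kampe_de_feriet_eq_three_pi_log_two :
    Summable (fun p : ℕ × ℕ =>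
      ((ascPochhammer ℝ (p.1 + p.2)).eval (2 : ℝ) / (ascPochhammer ℝ (p.1 + p.2)).eval (5 / 2 : ℝ)) *
        ((ascPochhammer ℝ p.1).eval (1 : ℝ) * (ascPochhammer ℝ p.1).eval (1 : ℝ) /
          ((ascPochhammer ℝ p.1).eval (2 : ℝ) * (p.1.factorial : ℝ))) *
        ((ascPochhammer ℝ p.2).eval (1 / 2 : ℝ) * (ascPochhammer ℝ p.2).eval (1 / 2 : ℝ) /
          ((ascPochhammer ℝ p.2).eval (1 : ℝ) * (p.2.factorial : ℝ)))) ∧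
    ∑' p : ℕ × ℕ,
      ((ascPochhammer ℝ (p.1 + p.2)).eval (2 : ℝ) / (ascPochhammer ℝ (p.1 + p.2)).eval (5 / 2 : ℝ)) *
        ((ascPochhammer ℝ p.1).eval (1 : ℝ) * (ascPochhammer ℝ p.1).eval (1 : ℝ) /
          ((ascPochhammer ℝ p.1).eval (2 : ℝ) * (p.1.factorial : ℝ))) *
        ((ascPochhammer ℝ p.2).eval (1 / 2 : ℝ) * (ascPochhammer ℝ p.2).eval (1 / 2 : ℝ) /
          ((ascPochhammer ℝ p.2).eval (1 : ℝ) * (p.2.factorial : ℝ))) =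
      3 * Real.pi * Real.log 2 := by
  exact ⟨kt_hasSum.summable, kt_hasSum.tsum_eq⟩
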